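/- arXiv:1511.07687 — 7 statements merged into one kernel-verified Lean document; each statement's English description precedes it below -/
import Mathlib

section
/- Existence of the Luenberger transformation (Theorem 1). Let Θ ⊂ R^q, let A: Θ → R^{n×n}, B: Θ → R^{n×1}, C: Θ → R^{1×n} be maps, and let λ_1, …, λ_r be negative real numbers such that λ_i is not an eigenvalue of A(θ) for every θ ∈ Θ and every i = 1,…,r. Then for every θ ∈ Θ, x ∈ R^n, w = (w_1,…,w_r) ∈ R^r and u ∈ R, each component T_i satisfies M_i(θ)(A(θ)x + B(θ)u) − M_i(θ)B(θ)(λ_i w_i + u) = λ_i T_i(x, θ, w_i) + C(θ)x; equivalently, since T is linear in (x,w), T solves the PDE (∂T/∂x)(x,θ,w)·(A(θ)x + B(θ)u) + (∂T/∂w)(x,θ,w)·(Λw + 1_r u) = Λ T(x, θ, w) + 1_r C(θ)x, where Λ = diag(λ_1,…,λ_r) and 1_r is the all-ones vector in R^r. -/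
open scoped Matrix BigOperators

/-- Theorem 1, existence of the Luenberger transformation.
Given maps `A : Θ → ℝ^{n×n}`, `B : Θ → ℝ^n` (column), `C : Θ → ℝ^n` (row) and negative
reals `λ 1, …, λ r` none of which is an eigenvalue of `A θ` for `θ ∈ Θ`, the map
`T i (x, θ, w i) = M i θ ⬝ (x − w i • B θ)` with `M i θ = C θ (A θ − λ i I)⁻¹`
satisfies, componentwise, the PDE
`M i θ ⬝ (A θ x + u B θ) − (M i θ ⬝ B θ) (λ i w i + u) = λ i ⬝ T i + C θ ⬝ x`. -/
theorem luenberger_transformation_exists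
    (n q r : ℕ) (Θ : Set (Fin q → ℝ))
    (A : (Fin q → ℝ) → Matrix (Fin n) (Fin n) ℝ)
    (B : (Fin q → ℝ) → (Fin n → ℝ))
    (C : (Fin q → ℝ) → (Fin n → ℝ))
    (lam : Fin r → ℝ)
    (hneg : ∀ i, lam i < 0)
    (heig : ∀ i, ∀ θ ∈ Θ, IsUnit (A θ - lam i • (1 : Matrix (Fin n) (Fin n) ℝ)).det)
    -- the transformation and its components
    (M : Fin r → (Fin q → ℝ) → (Fin n → ℝ))
    (hM : ∀ i θ, M i θ = Matrix.vecMul (C θ) (A θ - lam i • (1 : Matrix (Fin n) (Fin n) ℝ))⁻¹)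
    (T : (Fin n → ℝ) → (Fin q → ℝ) → (Fin r → ℝ) → (Fin r → ℝ))
    (hT : ∀ x θ w i, T x θ w i = M i θ ⬝ᵥ (x - w i • B θ)) :
    ∀ θ ∈ Θ, ∀ (x : Fin n → ℝ) (w : Fin r → ℝ) (u : ℝ) (i : Fin r),
      M i θ ⬝ᵥ (A θ *ᵥ x + u • B θ) - (M i θ ⬝ᵥ B θ) * (lam i * w i + u)
        = lam i * T x θ w i + C θ ⬝ᵥ x := by
  intro θ hθ x w u i
  have key : M i θ ᵥ* (A θ - lam i • (1 : Matrix (Fin n) (Fin n) ℝ)) = C θ := by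
    rw [hM, Matrix.vecMul_vecMul, Matrix.nonsing_inv_mul _ (heig i θ hθ), Matrix.vecMul_one]
  have key2 : C θ ⬝ᵥ x = M i θ ⬝ᵥ (A θ *ᵥ x) - lam i * (M i θ ⬝ᵥ x) := by
    rw [← key, ← Matrix.dotProduct_mulVec, Matrix.sub_mulVec, Matrix.smul_mulVec,
      Matrix.one_mulVec, dotProduct_sub, dotProduct_smul, smul_eq_mul]
  rw [hT, key2, dotProduct_add, dotProduct_sub, dotProduct_smul, dotProduct_smul,
    smul_eq_mul, smul_eq_mul]
  ring
end

section
/- Injectivity of T for high-gain eigenvalues (Theorem 2). Assume: C_x ⊂ R^n and C_θ are bounded open sets with closure of C_θ contained in Θ; there are an integer r, a bounded set U_r ⊂ R^{r−1} and a constant L_𝓗 > 0 such that |𝓗_r(x*,θ*,v) − 𝓗_r(x,θ,v)| ≥ L_𝓗 |(x−x*, θ−θ*)| for all (x,θ), (x*,θ*) ∈ Cl(C_x)×Cl(C_θ) and all v ∈ U_r. Let u: [0,∞) → R be of class C^{r−1} with |ū^{(r−1)}(t)| ≤ 𝔲 for all t ≥ 0 and some 𝔲 > 0. Then for every r-tuple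 of distinct negative reals (λ̃_1, …, λ̃_r), every τ > 0 and every w_0 ∈ R^r, there exist k* > 0 and L̄_T > 0 such that for all k > k*: setting λ_i = k λ̃_i (which for k > k* are not eigenvalues of A(θ) for θ ∈ Cl(C_θ)) and letting w: [0,∞) → R^r be the solution of ẇ_i(t) = λ_i w_i(t) + u(t) with w(0) = w_0, one has for every t_1 ≥ τ with ū^{(r−2)}(t_1) ∈ U_r and all (x,θ), (x*,θ*) ∈ C_x×C_θ: |T(x,θ,w(t_1)) − T(x*,θ*,w(t_1))| ≥ (L̄_T / k^r) |(x−x*, θ−θ*)|. -/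
open scoped Matrix BigOperators

attribute [local instance] Matrix.normedAddCommGroup Matrix.normedSpace

/-- The Euclidean norm of a vector in `ℝ^m`. -/
noncomputable def eNorm {m : ℕ} (x : Fin m → ℝ) : ℝ := Real.sqrt (∑ i, (x i) ^ 2)

/-- Euclidean norm of the concatenation of two vectors. -/
noncomputable def cNorm {m p : ℕ} (a : Fin m → ℝ) (b : Fin p → ℝ) : ℝ :=
  Real.sqrt (∑ i, (a i) ^ 2 + ∑ j, (b j) ^ 2)

/-- The down-shift matrix `S ∈ ℝ^{r×r}` : `(S s)₁ = 0`, `(S s)ᵢ = s_{i−1}`. -/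
def shiftMat (r : ℕ) : Matrix (Fin r) (Fin r) ℝ :=
  fun i j => if (i : ℕ) = (j : ℕ) + 1 then 1 else 0

/-- `H_r(θ)` : the `r × n` matrix stacking the rows `C(θ) A(θ)^{j-1}`, `j = 1,…,r`. -/
def obsMat (n q r : ℕ) (A : (Fin q → ℝ) → Matrix (Fin n) (Fin n) ℝ)
    (C : (Fin q → ℝ) → (Fin n → ℝ)) (θ : Fin q → ℝ) : Matrix (Fin r) (Fin n) ℝ :=
  fun j => Matrix.vecMul (C θ) (A θ ^ (j : ℕ))

/-- `𝓗_r(x, θ, v) = H_r(θ) x + Σ_{j=1}^{r−1} S^j H_r(θ) B(θ) v_{j−1}`. -/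
def HH (n q r : ℕ) (A : (Fin q → ℝ) → Matrix (Fin n) (Fin n) ℝ)
    (B : (Fin q → ℝ) → (Fin n → ℝ)) (C : (Fin q → ℝ) → (Fin n → ℝ))
    (x : Fin n → ℝ) (θ : Fin q → ℝ) (v : Fin (r - 1) → ℝ) : Fin r → ℝ :=
  obsMat n q r A C θ *ᵥ x
    + ∑ j : Fin (r - 1), v j •
        ((shiftMat r ^ ((j : ℕ) + 1)) *ᵥ (obsMat n q r A C θ *ᵥ B θ))

/-- recursive derivative sequence -/
def hseq {n : ℕ} (A : Matrix (Fin n) (Fin n) ℝ) (B x : Fin n → ℝ) (v : ℕ → ℝ) : ℕ → (Fin n → ℝ)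
  | 0 => x
  | j + 1 => A *ᵥ hseq A B x v j + v j • B

theorem hseq_closed {n : ℕ} (A : Matrix (Fin n) (Fin n) ℝ) (B x : Fin n → ℝ) (v : ℕ → ℝ) (i : ℕ) :
    hseq A B x v i = (A ^ i) *ᵥ x + ∑ l ∈ Finset.range i, v l • ((A ^ (i - 1 - l)) *ᵥ B) := by
  induction i with
  | zero => simp [hseq]
  | succ i ih =>
    rw [hseq, ih, Matrix.mulVec_add, Matrix.mulVec_mulVec, ← pow_succ', Finset.sum_range_succ,
      Matrix.mulVec_sum, add_assoc]
    congr 2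
    · apply Finset.sum_congr rfl
      intro l hl
      have hl' := Finset.mem_range.1 hl
      rw [Matrix.mulVec_smul, Matrix.mulVec_mulVec, ← pow_succ']
      congr 3
      omega
    · simp

theorem hseq_tele {n : ℕ} (A : Matrix (Fin n) (Fin n) ℝ) (B x : Fin n → ℝ) (v : ℕ → ℝ) (μ : ℝ)
    (m : ℕ) :
    x + (∑ l ∈ Finset.range m, μ ^ (l + 1) * v l) • B
      = (1 - μ • A) *ᵥ (∑ j ∈ Finset.range (m + 1), μ ^ j • hseq A B x v j)
        + μ ^ (m + 1) • (A *ᵥ hseq A B x v m) := by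
  induction m with
  | zero =>
    simp [hseq, Matrix.sub_mulVec, Matrix.smul_mulVec]
  | succ m ih =>
    rw [Finset.sum_range_succ, add_smul, ← add_assoc, ih, Finset.sum_range_succ _ (m + 1),
      Matrix.mulVec_add]
    simp only [Matrix.sub_mulVec, Matrix.smul_mulVec, Matrix.one_mulVec, Matrix.mulVec_smul]
    have : hseq A B x v (m + 1) = A *ᵥ hseq A B x v m + v m • B := rfl
    rw [this]
    simp only [Matrix.mulVec_add, Matrix.mulVec_smul]
    module

theorem shift_pow {r : ℕ} (m : ℕ) (g : Fin r → ℝ) (i : Fin r) :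
    ((shiftMat r ^ m) *ᵥ g) i
      = if h : m ≤ (i : ℕ) then g ⟨(i : ℕ) - m, by omega⟩ else 0 := by
  induction m generalizing i with
  | zero => simp
  | succ m ih =>
    rw [pow_succ', ← Matrix.mulVec_mulVec]
    have h0 : (shiftMat r *ᵥ ((shiftMat r ^ m) *ᵥ g)) i
      = ∑ j : Fin r, (if (i : ℕ) = (j : ℕ) + 1 then 1 else 0) * ((shiftMat r ^ m) *ᵥ g) j := rfl
    rw [h0]
    by_cases hi : (i : ℕ) = 0
    · rw [dif_neg (by omega)]
      apply Finset.sum_eq_zero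
      intro j _
      rw [if_neg (by omega), zero_mul]
    · rw [Finset.sum_eq_single (⟨(i : ℕ) - 1, by omega⟩ : Fin r)]
      · rw [ih, if_pos (by simp; omega), one_mul]
        by_cases h : m + 1 ≤ (i : ℕ)
        · rw [dif_pos h, dif_pos (by simp; omega)]
          congr 1
          ext
          simp
          omega
        · rw [dif_neg h, dif_neg (by simp; omega)]
      · intro j _ hj
        rw [if_neg, zero_mul]
        intro h
        apply hj
        ext
        simp
        omega
      · simp

theorem HH_eq (n q r : ℕ) (A : (Fin q → ℝ) → Matrix (Fin n) (Fin n) ℝ)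
    (B : (Fin q → ℝ) → (Fin n → ℝ)) (C : (Fin q → ℝ) → (Fin n → ℝ))
    (x : Fin n → ℝ) (θ : Fin q → ℝ) (v : ℕ → ℝ) (i : Fin r) :
    HH n q r A B C x θ (fun j => v j) i = C θ ⬝ᵥ hseq (A θ) (B θ) x v i := by
  have hobs : ∀ (y : Fin n → ℝ) (j : Fin r),
      (obsMat n q r A C θ *ᵥ y) j = C θ ⬝ᵥ ((A θ ^ (j : ℕ)) *ᵥ y) := by
    intro y j
    rw [Matrix.dotProduct_mulVec]
    rfl
  rw [hseq_closed, dotProduct_add, HH, Pi.add_apply, hobs, Finset.sum_apply]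
  congr 1
  rw [dotProduct_sum]
  simp only [Pi.smul_apply, shift_pow, hobs, smul_eq_mul, dotProduct_smul]
  rw [Fin.sum_univ_eq_sum_range (fun j => v j *
    if h : j + 1 ≤ (i : ℕ) then C θ ⬝ᵥ ((A θ ^ ((i : ℕ) - (j + 1))) *ᵥ B θ) else 0) (r - 1)]
  have hsub : Finset.range (i : ℕ) ⊆ Finset.range (r - 1) := by
    intro j hj
    have := Finset.mem_range.1 hj
    exact Finset.mem_range.2 (by omega)
  rw [← Finset.sum_subset hsub]
  · apply Finset.sum_congr rfl
    intro j hj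
    have := Finset.mem_range.1 hj
    rw [dif_pos (by omega)]
    congr 4
    omega
  · intro j _ hj
    have : ¬ j < (i : ℕ) := fun h => hj (Finset.mem_range.2 h)
    rw [dif_neg (by omega), mul_zero]

/-- scaled resolvent identities -/
theorem resolv {n : ℕ} (A : Matrix (Fin n) (Fin n) ℝ) (lam : ℝ) (hl : lam ≠ 0)
    (hd : (1 - lam⁻¹ • A).det ≠ 0) :
    IsUnit (A - lam • (1 : Matrix (Fin n) (Fin n) ℝ)).det ∧
    (A - lam • (1 : Matrix (Fin n) (Fin n) ℝ))⁻¹ = (-lam⁻¹) • (1 - lam⁻¹ • A)⁻¹ := by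
  have e : A - lam • (1 : Matrix (Fin n) (Fin n) ℝ) = (-lam) • (1 - lam⁻¹ • A) := by
    rw [smul_sub, smul_smul, neg_mul, mul_inv_cancel₀ hl]
    module
  refine ⟨?_, ?_⟩
  · rw [e, Matrix.det_smul]
    exact (mul_ne_zero (pow_ne_zero _ (neg_ne_zero.2 hl)) hd).isUnit
  · apply Matrix.inv_eq_left_inv
    rw [e, Matrix.smul_mul, Matrix.mul_smul, smul_smul, Matrix.nonsing_inv_mul _ hd.isUnit]
    rw [neg_mul_neg, inv_mul_cancel₀ hl, one_smul]

theorem T_expand {n r : ℕ} (hr : 2 ≤ r) (A : Matrix (Fin n) (Fin n) ℝ) (B C x : Fin n → ℝ)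
    (v : ℕ → ℝ)
    (lam : ℝ) (hl : lam ≠ 0) (hd : (1 - lam⁻¹ • A).det ≠ 0) (w ζ : ℝ)
    (hw : w = - (∑ l ∈ Finset.range (r - 1), lam⁻¹ ^ (l + 1) * v l) + lam⁻¹ ^ r * ζ) :
    Matrix.vecMul C (A - lam • (1 : Matrix (Fin n) (Fin n) ℝ))⁻¹ ⬝ᵥ (x - w • B)
      = - (∑ j : Fin r, lam⁻¹ ^ ((j : ℕ) + 1) * (C ⬝ᵥ hseq A B x v j))
        - lam⁻¹ ^ (r + 1) * (C ⬝ᵥ ((1 - lam⁻¹ • A)⁻¹ *ᵥ (A *ᵥ hseq A B x v (r - 1) - ζ • B))) := by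
  obtain ⟨m, rfl⟩ : ∃ m, r = m + 1 := ⟨r - 1, by omega⟩
  rw [(resolv A lam hl hd).2]
  simp only [Nat.add_sub_cancel] at hw ⊢
  set μ := lam⁻¹
  have e1 : x - w • B = (1 - μ • A) *ᵥ (∑ j ∈ Finset.range (m + 1), μ ^ j • hseq A B x v j)
      + μ ^ (m + 1) • (A *ᵥ hseq A B x v m - ζ • B) := by
    have := hseq_tele A B x v μ m
    rw [smul_sub, ← add_sub_assoc, ← this, hw]
    module
  rw [← Matrix.dotProduct_mulVec, e1, Matrix.smul_mulVec, Matrix.mulVec_add, Matrix.mulVec_mulVec,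
    Matrix.nonsing_inv_mul _ hd.isUnit, Matrix.one_mulVec, Matrix.mulVec_smul]
  rw [dotProduct_smul, dotProduct_add, dotProduct_sum, dotProduct_smul]
  rw [Fin.sum_univ_eq_sum_range (fun j => μ ^ (j + 1) * (C ⬝ᵥ hseq A B x v j)) (m + 1)]
  simp only [dotProduct_smul, smul_eq_mul]
  rw [mul_add, Finset.mul_sum, ← Finset.sum_neg_distrib, sub_eq_add_neg]
  congr 1
  · apply Finset.sum_congr rfl
    intro j _
    ring
  · ring

theorem gron (a D : ℝ) (ha : 0 < a) (hD : 0 ≤ D) (z d : ℝ → ℝ)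
    (hz : ∀ t, HasDerivAt z (-a * z t + d t) t) (hd : ∀ t ≥ 0, d t ≤ a * D) (t : ℝ) (ht : 0 ≤ t) :
    z t ≤ D + Real.exp (-a * t) * |z 0| := by
  have hg : ∀ s, HasDerivAt (fun s => Real.exp (a * s) * (z s - D))
      (Real.exp (a * s) * (d s - a * D)) s := by
    intro s
    have h1 : HasDerivAt (fun s => Real.exp (a * s)) (Real.exp (a * s) * a) s := by
      simpa using ((hasDerivAt_id s).const_mul a).exp
    refine (h1.fun_mul ((hz s).sub_const D)).congr_deriv ?_
    ring
  have hanti : AntitoneOn (fun s => Real.exp (a * s) * (z s - D)) (Set.Ici 0) := by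
    apply antitoneOn_of_deriv_nonpos (convex_Ici 0)
    · exact fun s _ => (hg s).continuousAt.continuousWithinAt
    · exact fun s _ => (hg s).differentiableAt.differentiableWithinAt
    · intro s hs
      rw [(hg s).deriv]
      have hs' : 0 ≤ s := interior_subset hs
      exact mul_nonpos_of_nonneg_of_nonpos (Real.exp_pos _).le (by linarith [hd s hs'])
  have h := hanti (Set.self_mem_Ici) (show t ∈ Set.Ici (0 : ℝ) from ht) ht
  simp only [mul_zero, Real.exp_zero, one_mul] at h
  have h2 : z t - D = Real.exp (-a * t) * (Real.exp (a * t) * (z t - D)) := by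
    rw [← mul_assoc, ← Real.exp_add]
    simp
  have h3 : Real.exp (-a * t) * (Real.exp (a * t) * (z t - D)) ≤ Real.exp (-a * t) * |z 0| := by
    apply mul_le_mul_of_nonneg_left _ (Real.exp_pos _).le
    linarith [le_abs_self (z 0)]
  linarith

theorem gron_abs (a D : ℝ) (ha : 0 < a) (hD : 0 ≤ D) (z d : ℝ → ℝ)
    (hz : ∀ t, HasDerivAt z (-a * z t + d t) t) (hd : ∀ t ≥ 0, |d t| ≤ a * D) (t : ℝ)
    (ht : 0 ≤ t) :
    |z t| ≤ D + Real.exp (-a * t) * |z 0| := by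
  rw [abs_le]
  constructor
  · have := gron a D ha hD (fun t => - z t) (fun t => - d t)
      (fun t => (hz t).fun_neg.congr_deriv (by ring))
      (fun t ht => (neg_le_abs _).trans (hd t ht)) t ht
    simp only [abs_neg] at this
    linarith
  · exact gron a D ha hD z d hz (fun t ht => (le_abs_self _).trans (hd t ht)) t ht

theorem eNorm_ge {m : ℕ} (x : Fin m → ℝ) : ‖x‖ ≤ eNorm x := by
  unfold eNorm
  rw [pi_norm_le_iff_of_nonneg (Real.sqrt_nonneg _)]
  intro i
  rw [Real.norm_eq_abs]
  apply Real.abs_le_sqrt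
  exact Finset.single_le_sum (f := fun i => x i ^ 2) (fun i _ => sq_nonneg _) (Finset.mem_univ i)

theorem eNorm_le {m : ℕ} (x : Fin m → ℝ) : eNorm x ≤ m * ‖x‖ := by
  apply Real.sqrt_le_iff.2
  refine ⟨by positivity, ?_⟩
  have h : ∑ i, x i ^ 2 ≤ ∑ i : Fin m, ‖x‖ ^ 2 := by
    apply Finset.sum_le_sum
    intro i _
    rw [← sq_abs]
    exact pow_le_pow_left₀ (abs_nonneg _) (norm_le_pi_norm x i) 2
  simp only [Finset.sum_const, Finset.card_univ, Fintype.card_fin, nsmul_eq_mul] at h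
  refine h.trans ?_
  rw [mul_pow]
  apply mul_le_mul_of_nonneg_right _ (sq_nonneg _)
  rcases Nat.eq_zero_or_pos m with rfl | hm
  · simp
  · have : (1 : ℝ) ≤ m := by exact_mod_cast hm
    nlinarith

theorem cNorm_ge {m p : ℕ} (a : Fin m → ℝ) (b : Fin p → ℝ) : ‖(a, b)‖ ≤ cNorm a b := by
  rw [Prod.norm_def, max_le_iff]
  constructor
  · refine (eNorm_ge a).trans (Real.sqrt_le_sqrt ?_)
    exact le_add_of_nonneg_right (Finset.sum_nonneg fun i _ => sq_nonneg _)
  · refine (eNorm_ge b).trans (Real.sqrt_le_sqrt ?_)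
    exact le_add_of_nonneg_left (Finset.sum_nonneg fun i _ => sq_nonneg _)

theorem vand {r : ℕ} (lam : Fin r → ℝ) (hl : ∀ i, lam i ≠ 0) (hinj : Function.Injective lam) :
    ∃ c > 0, ∀ (k : ℝ), 1 ≤ k → ∀ h : Fin r → ℝ,
      c / k ^ r * ‖h‖ ≤ ‖fun i => ∑ j : Fin r, (k * lam i)⁻¹ ^ ((j : ℕ) + 1) * h j‖ := by
  have hd : (Matrix.vandermonde fun i => (lam i)⁻¹).det ≠ 0 := by
    rw [Matrix.det_vandermonde_ne_zero_iff]
    exact fun i j h => hinj (inv_injective h)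
  let V : Matrix (Fin r) (Fin r) ℝ :=
    Matrix.diagonal (fun i => (lam i)⁻¹) * (Matrix.vandermonde fun i => (lam i)⁻¹)
  have hV : V.det ≠ 0 := by
    rw [Matrix.det_mul, Matrix.det_diagonal]
    exact mul_ne_zero (Finset.prod_ne_zero_iff.2 fun i _ => inv_ne_zero (hl i)) hd
  have hVi : Function.Injective V.mulVec := by
    rw [Matrix.mulVec_injective_iff_isUnit, Matrix.isUnit_iff_isUnit_det]
    exact hV.isUnit
  obtain ⟨K, hK, hanti⟩ := LinearMap.exists_antilipschitzWith (Matrix.mulVecLin V)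
    (LinearMap.ker_eq_bot.2 hVi)
  refine ⟨(K : ℝ)⁻¹, by positivity, ?_⟩
  intro k hk h
  have hk0 : 0 < k := by linarith
  let g : Fin r → ℝ := fun j => k⁻¹ ^ ((j : ℕ) + 1) * h j
  have e : (fun i => ∑ j : Fin r, (k * lam i)⁻¹ ^ ((j : ℕ) + 1) * h j) = V *ᵥ g := by
    ext i
    rw [← Matrix.mulVec_mulVec, Matrix.mulVec_diagonal]
    simp only [Matrix.mulVec, dotProduct, Matrix.vandermonde_apply, Finset.mul_sum, g]
    apply Finset.sum_congr rfl
    intro j _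
    rw [mul_inv]
    ring
  rw [e]
  have h1 : ‖g‖ ≤ K * ‖V *ᵥ g‖ := by
    have := hanti.le_mul_dist g 0
    simpa [dist_eq_norm] using this
  have h2 : ‖h‖ ≤ k ^ r * ‖g‖ := by
    rw [pi_norm_le_iff_of_nonneg (by positivity)]
    intro j
    have hj : h j = k ^ ((j : ℕ) + 1) * g j := by
      simp only [g]
      rw [← mul_assoc, ← mul_pow, mul_inv_cancel₀ hk0.ne', one_pow, one_mul]
    rw [hj, norm_mul]
    apply mul_le_mul _ (norm_le_pi_norm g j) (norm_nonneg _) (by positivity)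
    rw [Real.norm_eq_abs, abs_of_pos (by positivity)]
    exact pow_le_pow_right₀ hk (by omega)
  have h3 : ‖h‖ ≤ k ^ r * (K * ‖V *ᵥ g‖) :=
    h2.trans (mul_le_mul_of_nonneg_left h1 (by positivity))
  have hK' : (0 : ℝ) < K := by exact_mod_cast hK
  rw [div_mul_eq_mul_div, div_le_iff₀ (by positivity), inv_mul_le_iff₀ hK']
  linarith

theorem zeta_bound {r : ℕ} (hr : 2 ≤ r) (u : ℝ → ℝ) (hu : ContDiff ℝ (r - 1 : ℕ) u) (uu : ℝ)
    (huu : 0 < uu)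
    (hub : ∀ t ≥ (0 : ℝ), ∀ j < r, |iteratedDeriv j u t| ≤ uu)
    (τ : ℝ) (hτ : 0 < τ) (lam : ℝ) (hlam : lam ≤ -1) (w : ℝ → ℝ)
    (hw : ∀ t, HasDerivAt w (lam * w t + u t) t) (t : ℝ) (ht : τ ≤ t) :
    ∃ ζ : ℝ, |ζ| ≤ uu + (r.factorial / τ ^ r) * (|w 0| + r * uu) ∧
      w t = - (∑ l ∈ Finset.range (r - 1), lam⁻¹ ^ (l + 1) * iteratedDeriv l u t)
        + lam⁻¹ ^ r * ζ := by
  have hl0 : lam ≠ 0 := by linarith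
  obtain ⟨a, rfl⟩ : ∃ a, lam = -a := ⟨-lam, by ring⟩
  have ha : 1 ≤ a := by linarith
  have ha0 : 0 < a := by linarith
  obtain ⟨m, rfl⟩ : ∃ m, r = m + 1 := ⟨r - 1, by omega⟩
  simp only [Nat.add_sub_cancel] at hu ⊢
  set μ := (-a)⁻¹ with hμ
  have hμa : |μ| = a⁻¹ := by rw [hμ, abs_inv, abs_neg, abs_of_pos ha0]
  have hla : -a * μ = 1 := mul_inv_cancel₀ hl0
  let z : ℝ → ℝ := fun t => w t + ∑ l ∈ Finset.range m, μ ^ (l + 1) * iteratedDeriv l u t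
  have hder : ∀ l < m, ∀ t, HasDerivAt (iteratedDeriv l u) (iteratedDeriv (l + 1) u t) t := by
    intro l hl t
    rw [iteratedDeriv_succ]
    exact (hu.differentiable_iteratedDeriv l (by exact_mod_cast hl) t).hasDerivAt
  have hsum : ∀ (p : ℕ) t, u t + ∑ l ∈ Finset.range p, μ ^ (l + 1) * iteratedDeriv (l + 1) u t
      = -a * (∑ l ∈ Finset.range p, μ ^ (l + 1) * iteratedDeriv l u t)
        + μ ^ p * iteratedDeriv p u t := by
    intro p t
    induction p with
    | zero => simp
    | succ p ih =>
      rw [Finset.sum_range_succ, ← add_assoc, ih, Finset.sum_range_succ]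
      linear_combination (-(μ ^ p * iteratedDeriv p u t)) * hla
  have hz : ∀ t, HasDerivAt z (-a * z t + μ ^ m * iteratedDeriv m u t) t := by
    intro t
    have h1 : HasDerivAt z ((-a * w t + u t) +
        ∑ l ∈ Finset.range m, μ ^ (l + 1) * iteratedDeriv (l + 1) u t) t := by
      apply (hw t).fun_add
      apply HasDerivAt.fun_sum
      intro l hl
      exact (hder l (Finset.mem_range.1 hl) t).const_mul _
    refine h1.congr_deriv ?_
    rw [add_assoc, hsum]
    simp only [z]
    ring
  have ht0 : 0 ≤ t := by linarith
  have hb := gron_abs a (uu / a ^ (m + 1)) ha0 (by positivity) z _ hz (by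
    intro s hs
    rw [abs_mul, abs_pow, hμa]
    have e : a * (uu / a ^ (m + 1)) = a⁻¹ ^ m * uu := by
      rw [inv_pow]
      field_simp
      ring
    rw [e]
    exact mul_le_mul_of_nonneg_left (hub s hs m (by omega)) (by positivity)) t ht0
  have hz0 : |z 0| ≤ |w 0| + ((m + 1 : ℕ) : ℝ) * uu := by
    refine (abs_add_le _ _).trans ?_
    gcongr
    refine (Finset.abs_sum_le_sum_abs _ _).trans ?_
    have : ∀ l ∈ Finset.range m, |μ ^ (l + 1) * iteratedDeriv l u 0| ≤ uu := by
      intro l hl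
      have := Finset.mem_range.1 hl
      rw [abs_mul, abs_pow, hμa]
      have h1 : a⁻¹ ^ (l + 1) ≤ 1 := pow_le_one₀ (by positivity) (inv_le_one_of_one_le₀ ha)
      have h2 := hub 0 le_rfl l (by omega)
      calc a⁻¹ ^ (l + 1) * |iteratedDeriv l u 0| ≤ 1 * uu := by gcongr
        _ = uu := one_mul _
    refine (Finset.sum_le_sum this).trans ?_
    simp
    nlinarith
  refine ⟨(-a) ^ (m + 1) * z t, ?_, ?_⟩
  · rw [abs_mul, abs_pow, abs_neg, abs_of_pos ha0]
    have h1 : a ^ (m + 1) * Real.exp (-a * t) ≤ ((m + 1).factorial : ℝ) / τ ^ (m + 1) := by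
      have h2 := Real.pow_div_factorial_le_exp (a * τ) (by positivity) (m + 1)
      have h3 : Real.exp (a * τ) ≤ Real.exp (a * t) := Real.exp_le_exp.2 (by gcongr)
      have h4 := h2.trans h3
      rw [neg_mul, Real.exp_neg, ← div_eq_mul_inv, div_le_div_iff₀ (Real.exp_pos _) (by positivity)]
      rw [div_le_iff₀ (by positivity), mul_pow] at h4
      linarith
    calc a ^ (m + 1) * |z t| ≤ a ^ (m + 1) * (uu / a ^ (m + 1) + Real.exp (-a * t) * |z 0|) := by
          gcongr
      _ = uu + (a ^ (m + 1) * Real.exp (-a * t)) * |z 0| := by field_simp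
      _ ≤ _ := by gcongr
  · rw [← mul_assoc, ← mul_pow, mul_comm μ, hla]
    simp [z]

/-- pad a finite vector by zeros -/
def padv {r : ℕ} (v : Fin r → ℝ) (j : ℕ) : ℝ := if h : j < r then v ⟨j, h⟩ else 0

theorem cd_det {E : Type*} [NormedAddCommGroup E] [NormedSpace ℝ E] {n : ℕ}
    (M : E → Matrix (Fin n) (Fin n) ℝ) (hM : ∀ i j, ContDiff ℝ 1 fun p => M p i j) :
    ContDiff ℝ 1 fun p => (M p).det := by
  simp only [Matrix.det_apply']
  apply ContDiff.sum
  intro σ _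
  apply contDiff_const.mul
  apply contDiff_prod
  intro i _
  exact hM _ _

theorem cd_adj {E : Type*} [NormedAddCommGroup E] [NormedSpace ℝ E] {n : ℕ}
    (M : E → Matrix (Fin n) (Fin n) ℝ) (hM : ∀ i j, ContDiff ℝ 1 fun p => M p i j) (i j : Fin n) :
    ContDiff ℝ 1 fun p => (M p).adjugate i j := by
  simp only [Matrix.adjugate_apply]
  apply cd_det
  intro a b
  by_cases h : a = j
  · subst h
    simp only [Matrix.updateRow_self]
    exact contDiff_const
  · simp only [Matrix.updateRow_ne h]
    exact hM a b

theorem cd_hseq {E : Type*} [NormedAddCommGroup E] [NormedSpace ℝ E] {n r : ℕ}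
    (A : E → Matrix (Fin n) (Fin n) ℝ) (hA : ∀ i j, ContDiff ℝ 1 fun p => A p i j)
    (B x : E → Fin n → ℝ) (hB : ∀ i, ContDiff ℝ 1 fun p => B p i)
    (hx : ∀ i, ContDiff ℝ 1 fun p => x p i)
    (v : E → Fin r → ℝ) (hv : ∀ i, ContDiff ℝ 1 fun p => v p i) (j : ℕ) (i : Fin n) :
    ContDiff ℝ 1 fun p => hseq (A p) (B p) (x p) (padv (v p)) j i := by
  induction j generalizing i with
  | zero => exact hx i
  | succ j ih =>
    simp only [hseq, Pi.add_apply, Pi.smul_apply, smul_eq_mul, Matrix.mulVec, dotProduct]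
    apply ContDiff.add
    · apply ContDiff.sum
      intro l _
      exact (hA i l).mul (ih l)
    · refine ContDiff.mul ?_ (hB i)
      by_cases h : j < r
      · simp only [padv, dif_pos h]
        exact hv _
      · simp only [padv, dif_neg h]
        exact contDiff_const

theorem hseq_congr {n : ℕ} (A : Matrix (Fin n) (Fin n) ℝ) (B x : Fin n → ℝ) (v v' : ℕ → ℝ) (j : ℕ)
    (h : ∀ l < j, v l = v' l) : hseq A B x v j = hseq A B x v' j := by
  induction j with
  | zero => rfl
  | succ j ih =>
    rw [hseq, hseq, ih (fun l hl => h l (by omega)), h j (by omega)]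

theorem smooth_rem (n q r : ℕ) (hr : 2 ≤ r)
    (A : (Fin q → ℝ) → Matrix (Fin n) (Fin n) ℝ)
    (B : (Fin q → ℝ) → (Fin n → ℝ))
    (C : (Fin q → ℝ) → (Fin n → ℝ))
    (hA : ContDiff ℝ 1 A) (hB : ContDiff ℝ 1 B) (hC : ContDiff ℝ 1 C) (R : ℝ) (hR : 0 ≤ R) :
    ∃ μ0 > 0, ∃ K : ℝ, 0 ≤ K ∧
      (∀ μ : ℝ, |μ| ≤ μ0 → ∀ θ, ‖θ‖ ≤ R → (1 - μ • A θ).det ≠ 0) ∧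
      ∀ (μ ζ : ℝ) (v : ℕ → ℝ) (x x' : Fin n → ℝ) (θ θ' : Fin q → ℝ), |μ| ≤ μ0 → |ζ| ≤ R →
        (∀ j < r, |v j| ≤ R) → ‖x‖ ≤ R → ‖x'‖ ≤ R → ‖θ‖ ≤ R → ‖θ'‖ ≤ R →
        |C θ ⬝ᵥ ((1 - μ • A θ)⁻¹ *ᵥ (A θ *ᵥ hseq (A θ) (B θ) x v (r - 1) - ζ • B θ))
         - C θ' ⬝ᵥ ((1 - μ • A θ')⁻¹ *ᵥ (A θ' *ᵥ hseq (A θ') (B θ') x' v (r - 1) - ζ • B θ'))|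
          ≤ K * ‖(x - x', θ - θ')‖ := by
  have hA' : ∀ i j, ContDiff ℝ 1 fun θ => A θ i j := fun i j =>
    contDiff_pi.1 (contDiff_pi.1 hA i) j
  have hB' : ∀ i, ContDiff ℝ 1 fun θ => B θ i := contDiff_pi.1 hB
  have hC' : ∀ i, ContDiff ℝ 1 fun θ => C θ i := contDiff_pi.1 hC
  -- nonvanishing determinant
  have hdet0 : ContDiff ℝ 1 fun p : ℝ × (Fin q → ℝ) => (1 - p.1 • A p.2).det := by
    apply cd_det
    intro i j
    simp only [Matrix.sub_apply, Matrix.smul_apply, smul_eq_mul]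
    exact contDiff_const.sub (contDiff_fst.mul ((hA' i j).comp contDiff_snd))
  obtain ⟨S, T, hS, -, h0S, hT, hST⟩ := generalized_tube_lemma (isCompact_singleton (x := (0 : ℝ)))
    (isCompact_closedBall (0 : Fin q → ℝ) R)
    (n := {p : ℝ × (Fin q → ℝ) | (1 - p.1 • A p.2).det ≠ 0})
    (isOpen_ne_fun hdet0.continuous continuous_const) (by
      rintro ⟨μ, θ⟩ ⟨h1, -⟩
      simp only [Set.mem_singleton_iff] at h1
      simp [h1])
  obtain ⟨ε, hε, hεS⟩ := Metric.isOpen_iff.1 hS 0 (h0S rfl)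
  have hdet : ∀ μ : ℝ, |μ| ≤ ε / 2 → ∀ θ, ‖θ‖ ≤ R → (1 - μ • A θ).det ≠ 0 := by
    intro μ hμ θ hθ
    have := @hST (μ, θ) ⟨hεS (by simp; linarith), hT (by simpa using hθ)⟩
    exact this
  refine ⟨ε / 2, by positivity, ?_⟩
  let P := ((Fin n → ℝ) × (Fin q → ℝ)) × (ℝ × (Fin r → ℝ) × ℝ)
  let s : Set P := (Metric.closedBall 0 R ×ˢ Metric.closedBall 0 R) ×ˢ
    (Metric.closedBall 0 (ε / 2) ×ˢ Metric.closedBall 0 R ×ˢ Metric.closedBall 0 R)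
  have hsconv : Convex ℝ s := ((convex_closedBall _ _).prod (convex_closedBall _ _)).prod
    ((convex_closedBall _ _).prod ((convex_closedBall _ _).prod (convex_closedBall _ _)))
  have hscomp : IsCompact s := ((isCompact_closedBall _ _).prod (isCompact_closedBall _ _)).prod
    ((isCompact_closedBall _ _).prod ((isCompact_closedBall _ _).prod (isCompact_closedBall _ _)))
  let G : P → ℝ := fun p => C p.1.2 ⬝ᵥ ((1 - p.2.1 • A p.1.2)⁻¹ *ᵥ
    (A p.1.2 *ᵥ hseq (A p.1.2) (B p.1.2) p.1.1 (padv p.2.2.1) (r - 1) - p.2.2.2 • B p.1.2))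
  have cθ : ContDiff ℝ 1 fun p : P => p.1.2 := contDiff_snd.comp contDiff_fst
  have cA : ∀ i j, ContDiff ℝ 1 fun p : P => A p.1.2 i j := fun i j => (hA' i j).comp cθ
  have cB : ∀ i, ContDiff ℝ 1 fun p : P => B p.1.2 i := fun i => (hB' i).comp cθ
  have cC : ∀ i, ContDiff ℝ 1 fun p : P => C p.1.2 i := fun i => (hC' i).comp cθ
  have cM : ∀ i j, ContDiff ℝ 1 fun p : P => (1 - p.2.1 • A p.1.2) i j := by
    intro i j
    simp only [Matrix.sub_apply, Matrix.smul_apply, smul_eq_mul]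
    exact contDiff_const.sub ((contDiff_fst.comp contDiff_snd).mul (cA i j))
  have cx : ∀ i, ContDiff ℝ 1 fun p : P => p.1.1 i :=
    contDiff_pi.1 (contDiff_fst.comp contDiff_fst)
  have cv : ∀ i, ContDiff ℝ 1 fun p : P => p.2.2.1 i :=
    contDiff_pi.1 (contDiff_fst.comp (contDiff_snd.comp contDiff_snd))
  have cζ : ContDiff ℝ 1 fun p : P => p.2.2.2 := contDiff_snd.comp (contDiff_snd.comp contDiff_snd)
  have ch := cd_hseq (fun p : P => A p.1.2) cA (fun p => B p.1.2) (fun p => p.1.1) cB cx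
    (fun p => p.2.2.1) cv (r - 1)
  have cG : ContDiffOn ℝ 1 G s := by
    have hG : G = fun p : P => ∑ i, C p.1.2 i * ∑ j, (1 - p.2.1 • A p.1.2).det⁻¹ *
        (1 - p.2.1 • A p.1.2).adjugate i j *
        ((∑ l, A p.1.2 j l * hseq (A p.1.2) (B p.1.2) p.1.1 (padv p.2.2.1) (r - 1) l)
          - p.2.2.2 * B p.1.2 j) := by
      funext p
      simp only [G, Matrix.inv_def, Ring.inverse_eq_inv', dotProduct, Matrix.mulVec,
        Matrix.smul_apply, smul_eq_mul, Pi.sub_apply, Pi.smul_apply]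
    rw [hG]
    apply ContDiffOn.sum
    intro i _
    apply (cC i).contDiffOn.mul
    apply ContDiffOn.sum
    intro j _
    apply ContDiffOn.mul
    · apply ContDiffOn.mul
      · apply (cd_det _ cM).contDiffOn.inv
        rintro ⟨⟨x, θ⟩, μ, v, ζ⟩ ⟨⟨-, h2⟩, h3, -⟩
        exact hdet μ (by simpa using h3) θ (by simpa using h2)
      · exact (cd_adj _ cM i j).contDiffOn
    · apply ContDiff.contDiffOn
      apply ContDiff.sub
      · apply ContDiff.sum
        intro l _
        exact (cA j l).mul (ch l)
      · exact cζ.mul (cB j)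
  obtain ⟨K, hK⟩ := cG.exists_lipschitzOnWith one_ne_zero hsconv hscomp
  refine ⟨K, K.2, hdet, ?_⟩
  intro μ ζ v x x' θ θ' hμ hζ hv hx hx' hθ hθ'
  have hv' : ∀ y θ, hseq (A θ) (B θ) y v (r - 1)
      = hseq (A θ) (B θ) y (padv (fun j : Fin r => v j)) (r - 1) := by
    intro y θ
    apply hseq_congr
    intro l hl
    rw [padv, dif_pos (by omega)]
  have hvn : ‖fun j : Fin r => v j‖ ≤ R := by
    rw [pi_norm_le_iff_of_nonneg hR]
    exact fun j => hv j j.2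
  have h := hK.dist_le_mul ((x, θ), (μ, (fun j : Fin r => v j), ζ))
    ⟨⟨mem_closedBall_zero_iff.2 hx, mem_closedBall_zero_iff.2 hθ⟩,
      mem_closedBall_zero_iff.2 hμ, mem_closedBall_zero_iff.2 hvn, mem_closedBall_zero_iff.2 hζ⟩
    ((x', θ'), (μ, (fun j : Fin r => v j), ζ))
    ⟨⟨mem_closedBall_zero_iff.2 hx', mem_closedBall_zero_iff.2 hθ'⟩,
      mem_closedBall_zero_iff.2 hμ, mem_closedBall_zero_iff.2 hvn, mem_closedBall_zero_iff.2 hζ⟩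
  rw [hv', hv']
  have e : dist (((x, θ), (μ, (fun j : Fin r => v j), ζ)) : P)
      ((x', θ'), (μ, (fun j : Fin r => v j), ζ)) = ‖(x - x', θ - θ')‖ := by
    rw [dist_eq_norm, Prod.mk_sub_mk, sub_self, Prod.norm_def]
    simp
  rw [e, Real.dist_eq] at h
  exact h

/-- Theorem 2, injectivity of `T` for high-gain eigenvalues. -/
theorem injectivity_of_T_high_gain
    (n q r : ℕ) (hr : 2 ≤ r)
    (Θ : Set (Fin q → ℝ))
    (A : (Fin q → ℝ) → Matrix (Fin n) (Fin n) ℝ)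
    (B : (Fin q → ℝ) → (Fin n → ℝ))
    (C : (Fin q → ℝ) → (Fin n → ℝ))
    (hA : ContDiff ℝ 1 A) (hB : ContDiff ℝ 1 B) (hC : ContDiff ℝ 1 C)
    -- bounded open sets with `closure Cθ ⊆ Θ`
    (Cx : Set (Fin n → ℝ)) (Cθ : Set (Fin q → ℝ))
    (hCxo : IsOpen Cx) (hCxb : Bornology.IsBounded Cx)
    (hCθo : IsOpen Cθ) (hCθb : Bornology.IsBounded Cθ) (hCθΘ : closure Cθ ⊆ Θ)
    -- Assumption 1 : uniform differential injectivity
    (U : Set (Fin (r - 1) → ℝ)) (hU : Bornology.IsBounded U)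
    (LH : ℝ) (hLH : 0 < LH)
    (hinj : ∀ x ∈ closure Cx, ∀ x' ∈ closure Cx, ∀ θ ∈ closure Cθ, ∀ θ' ∈ closure Cθ,
        ∀ v ∈ U,
        eNorm (HH n q r A B C x' θ' v - HH n q r A B C x θ v)
          ≥ LH * cNorm (x - x') (θ - θ'))
    -- the input and its bound
    (u : ℝ → ℝ) (hu : ContDiff ℝ (r - 1 : ℕ) u) (𝔲 : ℝ) (h𝔲 : 0 < 𝔲)
    (hub : ∀ t ≥ (0 : ℝ), eNorm (fun i : Fin r => iteratedDeriv (i : ℕ) u t) ≤ 𝔲)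
    -- distinct negative real numbers, τ and w₀
    (lamt : Fin r → ℝ) (hlneg : ∀ i, lamt i < 0) (hldist : Function.Injective lamt)
    (τ : ℝ) (hτ : 0 < τ) (w0 : Fin r → ℝ) :
    ∃ kstar Lbar : ℝ, 0 < kstar ∧ 0 < Lbar ∧ ∀ k > kstar,
      -- for k > k*, the λ_i = k λ̃_i are not eigenvalues of A(θ) on the closure of Cθ
      (∀ i : Fin r, ∀ θ ∈ closure Cθ,
          IsUnit (A θ - (k * lamt i) • (1 : Matrix (Fin n) (Fin n) ℝ)).det) ∧
      -- and the injectivity bound holds along the filter solution w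
      ∀ w : ℝ → Fin r → ℝ, w 0 = w0 →
        (∀ (t : ℝ) (i : Fin r),
            HasDerivAt (fun s => w s i) (k * lamt i * w t i + u t) t) →
        ∀ t₁ ≥ τ, (fun j : Fin (r - 1) => iteratedDeriv (j : ℕ) u t₁) ∈ U →
        ∀ x ∈ Cx, ∀ x' ∈ Cx, ∀ θ ∈ Cθ, ∀ θ' ∈ Cθ,
          eNorm (fun i : Fin r =>
              Matrix.vecMul (C θ)
                  (A θ - (k * lamt i) • (1 : Matrix (Fin n) (Fin n) ℝ))⁻¹
                ⬝ᵥ (x - w t₁ i • B θ)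
              - Matrix.vecMul (C θ')
                  (A θ' - (k * lamt i) • (1 : Matrix (Fin n) (Fin n) ℝ))⁻¹
                ⬝ᵥ (x' - w t₁ i • B θ'))
            ≥ (Lbar / k ^ r) * cNorm (x - x') (θ - θ') := by
  have hr0 : (0 : ℝ) < r := by exact_mod_cast (by omega : 0 < r)
  have hub' : ∀ t ≥ (0 : ℝ), ∀ j < r, |iteratedDeriv j u t| ≤ 𝔲 := by
    intro t ht j hj
    exact (norm_le_pi_norm (fun i : Fin r => iteratedDeriv (i : ℕ) u t) ⟨j, hj⟩).trans
      ((eNorm_ge _).trans (hub t ht))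
  obtain ⟨c, hc, hvand⟩ := vand lamt (fun i => (hlneg i).ne) hldist
  obtain ⟨Rx, hRx⟩ := hCxb.subset_closedBall 0
  obtain ⟨Rθ, hRθ⟩ := hCθb.closure.subset_closedBall 0
  set Z : ℝ := 𝔲 + (r.factorial / τ ^ r) * (‖w0‖ + r * 𝔲) with hZ
  have hZ0 : 0 ≤ Z := by positivity
  set R : ℝ := |Rx| + |Rθ| + 𝔲 + Z with hRdef
  have hR1 : Rx ≤ R := by
    have := le_abs_self Rx; have := abs_nonneg Rθ; linarith
  have hR2 : Rθ ≤ R := by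
    have := le_abs_self Rθ; have := abs_nonneg Rx; linarith
  have hR3 : 𝔲 ≤ R := by
    have := abs_nonneg Rθ; have := abs_nonneg Rx; linarith
  have hR4 : Z ≤ R := by
    have := abs_nonneg Rθ; have := abs_nonneg Rx; linarith
  obtain ⟨μ0, hμ0, K, hK0, hdet, hlip⟩ := smooth_rem n q r hr A B C hA hB hC R (by linarith)
  set M : ℝ := ∑ i, |(lamt i)⁻¹| with hM
  have hM0 : 0 ≤ M := Finset.sum_nonneg fun i _ => abs_nonneg _
  have hMi : ∀ i, |(lamt i)⁻¹| ≤ M := fun i =>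
    Finset.single_le_sum (f := fun i => |(lamt i)⁻¹|) (fun i _ => abs_nonneg _) (Finset.mem_univ i)
  set c1 : ℝ := c * (LH / r) with hc1
  have hc10 : 0 < c1 := by positivity
  refine ⟨1 + M + M / μ0 + 2 * (M ^ (r + 1) * K) / c1, c1 / 2, by positivity, by positivity, ?_⟩
  intro k hk
  have p1 : 0 ≤ M / μ0 := by positivity
  have p2 : 0 ≤ 2 * (M ^ (r + 1) * K) / c1 := by positivity
  have hk1 : 1 ≤ k := by linarith
  have hk0 : 0 < k := by linarith
  have hkM : M ≤ k := by linarith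
  have hkμ : M / k ≤ μ0 := by
    have : M / μ0 ≤ k := by linarith
    rw [div_le_iff₀ hμ0] at this
    rw [div_le_iff₀ hk0]
    linarith
  have hkK : M ^ (r + 1) * K / k ≤ c1 / 2 := by
    have : 2 * (M ^ (r + 1) * K) / c1 ≤ k := by linarith
    rw [div_le_iff₀ hc10] at this
    rw [div_le_iff₀ hk0]
    linarith
  have hμk : ∀ i, |(k * lamt i)⁻¹| ≤ M / k := by
    intro i
    rw [mul_inv, abs_mul, abs_of_pos (inv_pos.2 hk0), div_eq_inv_mul]
    exact mul_le_mul_of_nonneg_left (hMi i) (inv_pos.2 hk0).le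
  have hlam0 : ∀ i, k * lamt i ≠ 0 := fun i => mul_ne_zero hk0.ne' (hlneg i).ne
  have hlam1 : ∀ i, k * lamt i ≤ -1 := by
    intro i
    have h1 : |(k * lamt i)⁻¹| ≤ 1 := (hμk i).trans ((div_le_one hk0).2 hkM)
    have h2 : k * lamt i < 0 := mul_neg_of_pos_of_neg hk0 (hlneg i)
    rw [abs_inv, abs_of_neg h2, inv_le_one₀ (by linarith)] at h1
    linarith
  have hdk : ∀ i, ∀ θ ∈ closure Cθ, (1 - (k * lamt i)⁻¹ • A θ).det ≠ 0 := fun i θ hθ =>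
    hdet _ ((hμk i).trans hkμ) θ ((mem_closedBall_zero_iff.1 (hRθ hθ)).trans hR2)
  refine ⟨fun i θ hθ => (resolv (A θ) _ (hlam0 i) (hdk i θ hθ)).1, ?_⟩
  intro w hw0 hw t₁ ht₁ hU₁ x hx x' hx' θ hθ θ' hθ'
  have hxR : ∀ y ∈ Cx, ‖y‖ ≤ R := fun y hy => (mem_closedBall_zero_iff.1 (hRx hy)).trans hR1
  have hθR : ∀ y ∈ Cθ, ‖y‖ ≤ R := fun y hy =>
    (mem_closedBall_zero_iff.1 (hRθ (subset_closure hy))).trans hR2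
  set v : ℕ → ℝ := fun j => iteratedDeriv j u t₁ with hv
  have ht0 : 0 ≤ t₁ := by linarith
  have hζ : ∀ i, ∃ ζ : ℝ, |ζ| ≤ Z ∧
      w t₁ i = - (∑ l ∈ Finset.range (r - 1), (k * lamt i)⁻¹ ^ (l + 1) * v l)
        + (k * lamt i)⁻¹ ^ r * ζ := by
    intro i
    obtain ⟨ζ, h1, h2⟩ := zeta_bound hr u hu 𝔲 h𝔲 hub' τ hτ (k * lamt i) (hlam1 i)
      (fun s => w s i) (fun t => hw t i) t₁ ht₁
    refine ⟨ζ, h1.trans ?_, h2⟩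
    have h3 : |w 0 i| ≤ ‖w0‖ := by
      rw [hw0]; exact norm_le_pi_norm w0 i
    rw [hZ]
    gcongr
  choose ζ hζ1 hζ2 using hζ
  let g : Fin r → ℝ := HH n q r A B C x' θ' (fun j => v j) - HH n q r A B C x θ (fun j => v j)
  let G : ℝ → ℝ → (Fin n → ℝ) → (Fin q → ℝ) → ℝ := fun μ ζ x θ =>
    C θ ⬝ᵥ ((1 - μ • A θ)⁻¹ *ᵥ (A θ *ᵥ hseq (A θ) (B θ) x v (r - 1) - ζ • B θ))
  let ρ : Fin r → ℝ := fun i => (k * lamt i)⁻¹ ^ (r + 1) *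
    (G (k * lamt i)⁻¹ (ζ i) x θ - G (k * lamt i)⁻¹ (ζ i) x' θ')
  have hT : (fun i : Fin r =>
              Matrix.vecMul (C θ)
                  (A θ - (k * lamt i) • (1 : Matrix (Fin n) (Fin n) ℝ))⁻¹
                ⬝ᵥ (x - w t₁ i • B θ)
              - Matrix.vecMul (C θ')
                  (A θ' - (k * lamt i) • (1 : Matrix (Fin n) (Fin n) ℝ))⁻¹
                ⬝ᵥ (x' - w t₁ i • B θ'))
      = (fun i => ∑ j : Fin r, (k * lamt i)⁻¹ ^ ((j : ℕ) + 1) * g j) - ρ := by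
    funext i
    rw [T_expand hr (A θ) (B θ) (C θ) x v _ (hlam0 i) (hdk i θ (subset_closure hθ)) _ _ (hζ2 i),
      T_expand hr (A θ') (B θ') (C θ') x' v _ (hlam0 i) (hdk i θ' (subset_closure hθ')) _ _ (hζ2 i)]
    simp only [Pi.sub_apply, g, HH_eq, ρ, G, mul_sub, Finset.sum_sub_distrib]
    ring
  rw [hT]
  set Δ := cNorm (x - x') (θ - θ') with hΔ
  have hΔ0 : 0 ≤ Δ := Real.sqrt_nonneg _
  have hg : LH / r * Δ ≤ ‖g‖ := by
    have h1 := hinj x (subset_closure hx) x' (subset_closure hx') θ (subset_closure hθ) θ'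
      (subset_closure hθ') _ hU₁
    have h2 := h1.le.trans (eNorm_le _)
    rw [div_mul_eq_mul_div, div_le_iff₀ hr0, mul_comm ‖g‖]
    exact h2
  have hρ : ‖ρ‖ ≤ (M / k) ^ (r + 1) * (K * Δ) := by
    rw [pi_norm_le_iff_of_nonneg (by positivity)]
    intro i
    simp only [ρ]
    rw [norm_mul, norm_pow, Real.norm_eq_abs, Real.norm_eq_abs]
    have h1 := hlip (k * lamt i)⁻¹ (ζ i) v x x' θ θ' ((hμk i).trans hkμ) ((hζ1 i).trans hR4)
      (fun j hj => (hub' t₁ ht0 j hj).trans hR3) (hxR x hx) (hxR x' hx') (hθR θ hθ) (hθR θ' hθ')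
    have h2 : K * ‖(x - x', θ - θ')‖ ≤ K * Δ := mul_le_mul_of_nonneg_left (cNorm_ge _ _) hK0
    exact mul_le_mul (pow_le_pow_left₀ (abs_nonneg _) (hμk i) _) (h1.trans h2) (abs_nonneg _)
      (by positivity)
  have hρ' : (M / k) ^ (r + 1) * (K * Δ) ≤ c1 / 2 / k ^ r * Δ := by
    have e : (M / k) ^ (r + 1) * (K * Δ) = (M ^ (r + 1) * K / k) / k ^ r * Δ := by
      rw [div_pow, pow_succ k]
      field_simp
    rw [e]
    gcongr
  have hmain : c1 / k ^ r * Δ ≤ c / k ^ r * ‖g‖ := by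
    have e : c1 / k ^ r * Δ = c / k ^ r * (LH / r * Δ) := by
      rw [hc1]; ring
    rw [e]
    exact mul_le_mul_of_nonneg_left hg (by positivity)
  have hv1 := hvand k hk1 g
  have htri := norm_sub_norm_le (fun i => ∑ j : Fin r, (k * lamt i)⁻¹ ^ ((j : ℕ) + 1) * g j) ρ
  have hfin := eNorm_ge ((fun i => ∑ j : Fin r, (k * lamt i)⁻¹ ^ ((j : ℕ) + 1) * g j) - ρ)
  have e2 : c1 / k ^ r * Δ = c1 / 2 / k ^ r * Δ + c1 / 2 / k ^ r * Δ := by ring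
  linarith
end

section
/- Asymptotic expansion of the filter state. Let r ≥ 2, let λ < 0 and let u: [0,∞) → R be of class C^{r−1} with |u^{(j)}(t)| ≤ 𝔲 for all t ≥ 0 and all 0 ≤ j ≤ r−1. Let w: [0,∞) → R be a C^1 solution of ẇ(t) = λ w(t) + u(t). Then for all t ≥ 0, w(t) = − Σ_{j=0}^{r−2} u^{(j)}(t)/λ^{j+1} + R_w(t), where R_w(t) = e^{λ t}( w(0) + Σ_{j=0}^{r−2} u^{(j)}(0)/λ^{j+1} ) + λ^{−(r−1)} ∫_0^t e^{λ(t−s)} u^{(r−1)}(s) ds, and |R_w(t)| ≤ e^{λ t} | w(0) + Σ_{j=0}^{r−2} u^{(j)}(0)/λ^{j+1} | + 𝔲/|λ|^r. -/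
open scoped BigOperators

/-- The remainder term `R_w(t)` in the asymptotic expansion of the filter state. -/
noncomputable def Rw (r : ℕ) (lam : ℝ) (u w : ℝ → ℝ) (t : ℝ) : ℝ :=
  Real.exp (lam * t)
      * (w 0 + ∑ j ∈ Finset.range (r - 1), iteratedDeriv j u 0 / lam ^ (j + 1))
    + lam⁻¹ ^ (r - 1)
      * ∫ s in (0 : ℝ)..t, Real.exp (lam * (t - s)) * iteratedDeriv (r - 1) u s

/-- asymptotic expansion of the filter state.
If `ẇ = λ w + u` with `λ < 0` and `u` of class `C^{r−1}` with all derivatives up to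
order `r−1` bounded by `𝔲` on `[0,∞)`, then
`w(t) = − Σ_{j=0}^{r−2} u^{(j)}(t)/λ^{j+1} + R_w(t)`, with
`|R_w(t)| ≤ e^{λt} |w(0) + Σ_{j=0}^{r−2} u^{(j)}(0)/λ^{j+1}| + 𝔲/|λ|^r`. -/
theorem filter_state_expansion
    (r : ℕ) (hr : 2 ≤ r) (lam : ℝ) (hlam : lam < 0)
    (u : ℝ → ℝ) (hu : ContDiff ℝ (r - 1 : ℕ) u)
    (𝔲 : ℝ)
    (hub : ∀ t ≥ (0 : ℝ), ∀ j ≤ r - 1, |iteratedDeriv j u t| ≤ 𝔲)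
    (w : ℝ → ℝ)
    (hw : ∀ t ≥ (0 : ℝ), HasDerivAt w (lam * w t + u t) t) :
    ∀ t ≥ (0 : ℝ),
      w t = -(∑ j ∈ Finset.range (r - 1), iteratedDeriv j u t / lam ^ (j + 1))
              + Rw r lam u w t ∧
      |Rw r lam u w t|
        ≤ Real.exp (lam * t)
              * |w 0 + ∑ j ∈ Finset.range (r - 1), iteratedDeriv j u 0 / lam ^ (j + 1)|
          + 𝔲 / |lam| ^ r := by
  intro t ht
  obtain ⟨n, rfl⟩ : ∃ n, r = n + 1 := ⟨r - 1, by omega⟩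
  unfold Rw
  simp only [Nat.add_sub_cancel] at *
  have hl : lam ≠ 0 := hlam.ne
  have hcont : Continuous (iteratedDeriv n u) := hu.continuous_iteratedDeriv n le_rfl
  have hder : ∀ j < n, ∀ s, HasDerivAt (iteratedDeriv j u) (iteratedDeriv (j + 1) u s) s := by
    intro j hj s
    rw [iteratedDeriv_succ]
    exact ((hu.differentiable_iteratedDeriv j (by exact_mod_cast hj)) s).hasDerivAt
  have htel : ∀ s, ∀ m : ℕ, u s + ∑ j ∈ Finset.range m, iteratedDeriv (j + 1) u s / lam ^ (j + 1)
      = lam * (∑ j ∈ Finset.range m, iteratedDeriv j u s / lam ^ (j + 1))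
        + lam⁻¹ ^ m * iteratedDeriv m u s := by
    intro s m
    induction m with
    | zero => simp
    | succ k ih =>
      rw [Finset.sum_range_succ, Finset.sum_range_succ, ← add_assoc, ih]
      generalize (∑ j ∈ Finset.range k, iteratedDeriv j u s / lam ^ (j + 1)) = S
      rw [inv_pow, inv_pow]
      field_simp
      ring
  have hE : ∀ s, HasDerivAt (fun s => Real.exp (lam * (t - s)))
      (Real.exp (lam * (t - s)) * (lam * (-1))) s := by
    intro s
    exact (((hasDerivAt_id s).const_sub t).const_mul lam).exp
  have hg : ∀ s ≥ (0 : ℝ), HasDerivAt (fun s => Real.exp (lam * (t - s)) *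
      (w s + ∑ j ∈ Finset.range n, iteratedDeriv j u s / lam ^ (j + 1)))
      (lam⁻¹ ^ n * (Real.exp (lam * (t - s)) * iteratedDeriv n u s)) s := by
    intro s hs
    have h1 : HasDerivAt (fun s => ∑ j ∈ Finset.range n, iteratedDeriv j u s / lam ^ (j + 1))
        (∑ j ∈ Finset.range n, iteratedDeriv (j + 1) u s / lam ^ (j + 1)) s :=
      HasDerivAt.fun_sum fun j hj => (hder j (Finset.mem_range.1 hj) s).div_const _
    have h2 := (hE s).mul ((hw s hs).add h1)
    refine h2.congr_deriv ?_
    have := htel s n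
    simp only [Pi.add_apply]
    linear_combination Real.exp (lam * (t - s)) * this
  have hEc : Continuous fun s => Real.exp (lam * (t - s)) := by fun_prop
  have hFTC := intervalIntegral.integral_eq_sub_of_hasDerivAt (a := 0) (b := t)
    (fun s hs => hg s (by rw [Set.uIcc_of_le ht] at hs; exact hs.1))
    ((continuous_const.mul (hEc.mul hcont)).intervalIntegrable _ _)
  rw [intervalIntegral.integral_const_mul] at hFTC
  simp only [sub_self, mul_zero, Real.exp_zero, one_mul, sub_zero] at hFTC
  refine ⟨by rw [hFTC]; ring, ?_⟩
  have hU : 0 ≤ 𝔲 := (abs_nonneg _).trans (hub 0 le_rfl 0 (Nat.zero_le _))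
  have hI : ∫ s in (0 : ℝ)..t, Real.exp (lam * (t - s)) * 𝔲
      = 𝔲 * (1 - Real.exp (lam * t)) / |lam| := by
    have h := intervalIntegral.integral_eq_sub_of_hasDerivAt (a := 0) (b := t)
      (f := fun s => Real.exp (lam * (t - s)) * (𝔲 * (-1) / lam))
      (f' := fun s => Real.exp (lam * (t - s)) * 𝔲)
      (fun s _ => ((hE s).mul_const _).congr_deriv (by field_simp))
      ((hEc.mul continuous_const).intervalIntegrable _ _)
    rw [h, abs_of_neg hlam]
    simp only [sub_self, mul_zero, Real.exp_zero, one_mul, sub_zero]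
    field_simp
    ring
  have hB : |∫ s in (0 : ℝ)..t, Real.exp (lam * (t - s)) * iteratedDeriv n u s| ≤ 𝔲 / |lam| := by
    calc _ ≤ ∫ s in (0 : ℝ)..t, Real.exp (lam * (t - s)) * 𝔲 := by
          rw [← Real.norm_eq_abs]
          refine intervalIntegral.norm_integral_le_of_norm_le ht ?_
            ((hEc.mul continuous_const).intervalIntegrable _ _)
          refine Filter.Eventually.of_forall fun s hs => ?_
          rw [Real.norm_eq_abs, abs_mul, Real.abs_exp]
          exact mul_le_mul_of_nonneg_left (hub s hs.1.le n le_rfl) (Real.exp_pos _).le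
      _ ≤ _ := by
          rw [hI]
          gcongr
          nlinarith [mul_nonneg hU (Real.exp_pos (lam * t)).le]
  refine (abs_add_le _ _).trans ?_
  rw [abs_mul, Real.abs_exp, abs_mul, abs_pow, abs_inv]
  gcongr
  calc _ ≤ |lam|⁻¹ ^ n * (𝔲 / |lam|) := by gcongr
    _ = _ := by
      have : |lam| ≠ 0 := abs_ne_zero.2 hl
      rw [inv_pow]
      field_simp
      ring
end

section
/- McShane left inverse (Proposition 1). Let C_x ⊂ R^n and C_θ ⊂ R^q be bounded open sets, C_w any set, and T: Cl(C_x) × Cl(C_θ) × C_w → R^r a map such that for some L_T > 0, |T(x,θ,w) − T(x*,θ*,w)| ≥ L_T |(x−x*, θ−θ*)| for all (x,θ), (x*,θ*) ∈ Cl(C_x)×Cl(C_θ) and all w ∈ C_w. Define T*: R^r × C_w → R^n × R^q componentwise by T*_{x_i}(z,w) = inf_{(x,θ) ∈ Cl(C_x×C_θ)} { x_i + (1/L_T)|T(x,θ,w) − z| } and T*_{θ_j}(z,w) = inf_{(x,θ) ∈ Cl(C_x×C_θ)} { θ_j + (1/L_T)|T(x,θ,w) − z| }. Then for all z ∈ R^r,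 (x,θ) ∈ C_x × C_θ and w ∈ C_w: |T*(z,w) − (x,θ)| ≤ (√(n+q)/L_T) |z − T(x,θ,w)|. -/
open scoped BigOperators

theorem eNorm_eq_norm_aux {m : ℕ} (x : Fin m → ℝ) : eNorm x = ‖WithLp.toLp 2 x‖ := by
  simp [eNorm, EuclideanSpace.norm_eq]

theorem eNorm_comm_aux {m : ℕ} (x y : Fin m → ℝ) : eNorm (x - y) = eNorm (y - x) := by
  rw [eNorm_eq_norm_aux, eNorm_eq_norm_aux, WithLp.toLp_sub, WithLp.toLp_sub, norm_sub_rev]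

theorem eNorm_tri_aux {m : ℕ} (x y z : Fin m → ℝ) :
    eNorm (x - y) ≤ eNorm (z - x) + eNorm (y - z) := by
  rw [eNorm_comm_aux z x, eNorm_comm_aux y z]
  simp only [eNorm_eq_norm_aux, WithLp.toLp_sub]
  exact norm_sub_le_norm_sub_add_norm_sub _ _ _

theorem sInf_abs_aux (S : Set ℝ) (a c : ℝ) (h1 : a + c ∈ S) (h2 : ∀ y ∈ S, a - c ≤ y) :
    (sInf S - a) ^ 2 ≤ c ^ 2 := by
  have hu : sInf S ≤ a + c := csInf_le ⟨a - c, h2⟩ h1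
  have hl : a - c ≤ sInf S := le_csInf ⟨_, h1⟩ h2
  apply sq_le_sq'
  · linarith
  · linarith

/-- Proposition 1, McShane left inverse.
If `T` satisfies the uniform injectivity bound
`|T(x,θ,w) − T(x*,θ*,w)| ≥ L_T |(x−x*, θ−θ*)|` on `Cl(C_x)×Cl(C_θ)` for every `w ∈ C_w`
(and is continuous there), then the McShane-type function `T*` defined componentwise by
infima satisfies `|T*(z,w) − (x,θ)| ≤ (√(n+q)/L_T) |z − T(x,θ,w)|`. -/
theorem mcshane_left_inverse
    {W : Type*} (n q r : ℕ)
    (Cx : Set (Fin n → ℝ)) (Cθ : Set (Fin q → ℝ)) (Cw : Set W)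
    (hCxo : IsOpen Cx) (hCxb : Bornology.IsBounded Cx)
    (hCθo : IsOpen Cθ) (hCθb : Bornology.IsBounded Cθ)
    (T : (Fin n → ℝ) → (Fin q → ℝ) → W → (Fin r → ℝ))
    (hTcont : ∀ w ∈ Cw,
      ContinuousOn (fun p : (Fin n → ℝ) × (Fin q → ℝ) => T p.1 p.2 w)
        ((closure Cx) ×ˢ (closure Cθ)))
    (LT : ℝ) (hLT : 0 < LT)
    (hinj : ∀ x ∈ closure Cx, ∀ x' ∈ closure Cx, ∀ θ ∈ closure Cθ, ∀ θ' ∈ closure Cθ,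
        ∀ w ∈ Cw,
        eNorm (T x θ w - T x' θ' w)
          ≥ LT * Real.sqrt (∑ i, (x i - x' i) ^ 2 + ∑ j, (θ j - θ' j) ^ 2))
    -- the McShane components of `T*`
    (TstarX : (Fin r → ℝ) → W → (Fin n → ℝ))
    (hTstarX : ∀ z w i, TstarX z w i
      = sInf {y : ℝ | ∃ x' ∈ closure Cx, ∃ θ' ∈ closure Cθ,
          y = x' i + (1 / LT) * eNorm (T x' θ' w - z)})
    (TstarTheta : (Fin r → ℝ) → W → (Fin q → ℝ))
    (hTstarTheta : ∀ z w j, TstarTheta z w j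
      = sInf {y : ℝ | ∃ x' ∈ closure Cx, ∃ θ' ∈ closure Cθ,
          y = θ' j + (1 / LT) * eNorm (T x' θ' w - z)}) :
    ∀ (z : Fin r → ℝ), ∀ x ∈ Cx, ∀ θ ∈ Cθ, ∀ w ∈ Cw,
      Real.sqrt (∑ i, (TstarX z w i - x i) ^ 2 + ∑ j, (TstarTheta z w j - θ j) ^ 2)
        ≤ (Real.sqrt ((n : ℝ) + (q : ℝ)) / LT) * eNorm (z - T x θ w) := by
  intro z x hx θ hθ w hw
  have hx' := subset_closure hx
  have hθ' := subset_closure hθ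
  set c : ℝ := (1 / LT) * eNorm (z - T x θ w) with hc
  have hc0 : 0 ≤ c := by
    have : 0 ≤ eNorm (z - T x θ w) := Real.sqrt_nonneg _
    positivity
  have key : ∀ x' ∈ closure Cx, ∀ θ' ∈ closure Cθ,
      Real.sqrt (∑ i, (x i - x' i) ^ 2 + ∑ j, (θ j - θ' j) ^ 2)
        ≤ c + (1 / LT) * eNorm (T x' θ' w - z) := by
    intro x' h1 θ' h2
    have h := hinj x hx' x' h1 θ hθ' θ' h2 w hw
    have ht := eNorm_tri_aux (T x θ w) (T x' θ' w) z
    rw [hc, ← mul_add, one_div, ← div_eq_inv_mul, le_div_iff₀ hLT]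
    linarith
  have hX : ∀ i, (TstarX z w i - x i) ^ 2 ≤ c ^ 2 := by
    intro i
    rw [hTstarX]
    apply sInf_abs_aux
    · exact ⟨x, hx', θ, hθ', by rw [hc, eNorm_comm_aux]⟩
    · rintro y ⟨x', h1, θ', h2, rfl⟩
      have hk := key x' h1 θ' h2
      have : x i - x' i ≤ Real.sqrt (∑ i, (x i - x' i) ^ 2 + ∑ j, (θ j - θ' j) ^ 2) := by
        apply Real.le_sqrt_of_sq_le
        have a1 := Finset.single_le_sum (f := fun i => (x i - x' i) ^ 2)
          (fun i _ => sq_nonneg _) (Finset.mem_univ i)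
        have a2 : 0 ≤ ∑ j, (θ j - θ' j) ^ 2 := Finset.sum_nonneg fun j _ => sq_nonneg _
        linarith
      linarith
  have hT : ∀ j, (TstarTheta z w j - θ j) ^ 2 ≤ c ^ 2 := by
    intro j
    rw [hTstarTheta]
    apply sInf_abs_aux
    · exact ⟨x, hx', θ, hθ', by rw [hc, eNorm_comm_aux]⟩
    · rintro y ⟨x', h1, θ', h2, rfl⟩
      have hk := key x' h1 θ' h2
      have : θ j - θ' j ≤ Real.sqrt (∑ i, (x i - x' i) ^ 2 + ∑ j, (θ j - θ' j) ^ 2) := by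
        apply Real.le_sqrt_of_sq_le
        have a1 := Finset.single_le_sum (f := fun i => (θ i - θ' i) ^ 2)
          (fun i _ => sq_nonneg _) (Finset.mem_univ j)
        have a2 : 0 ≤ ∑ j, (x j - x' j) ^ 2 := Finset.sum_nonneg fun j _ => sq_nonneg _
        linarith
      linarith
  have s1 := Finset.sum_le_sum (s := Finset.univ) fun i _ => hX i
  have s2 := Finset.sum_le_sum (s := Finset.univ) fun j _ => hT j
  simp only [Finset.sum_const, Finset.card_univ, Fintype.card_fin, nsmul_eq_mul] at s1 s2
  have e : (Real.sqrt ((n : ℝ) + (q : ℝ)) / LT) * eNorm (z - T x θ w)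
      = Real.sqrt ((n : ℝ) + (q : ℝ)) * c := by rw [hc]; ring
  rw [e, ← Real.sqrt_sq hc0, ← Real.sqrt_mul (by positivity)]
  apply Real.sqrt_le_sqrt
  linarith
end

section
/- Differential excitation implies persistent excitation (Proposition 3). Let r be a positive integer and u: R → R a C^{2r} function which is differentially exciting of order r at time t, i.e. the Hankel matrix 𝔐_r(ū^{(2r)}(t)) is invertible. Then there exist ε > 0 and ρ > 0 such that ∫_t^{t+ε} ū^{(r)}(s) (ū^{(r)}(s))^T ds ⪰ ρ I_{r+1}, i.e. for every ξ ∈ R^{r+1}, ∫_t^{t+ε} ⟨ξ, ū^{(r)}(s)⟩² ds ≥ ρ |ξ|². -/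
open scoped BigOperators

/-- The `(m+1)×(m+1)` Hankel matrix of a vector `v = (v_0, …, v_{2m}) ∈ ℝ^{2m+1}` :
entry `(i,j)` is `v_{i+j}`. -/
def hankelMat (m : ℕ) (v : Fin (2 * m + 1) → ℝ) : Matrix (Fin (m + 1)) (Fin (m + 1)) ℝ :=
  fun i j => v ⟨(i : ℕ) + (j : ℕ), by have := i.2; have := j.2; omega⟩

theorem hankel_aux (r : ℕ) (u : ℝ → ℝ) (hu : ContDiff ℝ (2 * r : ℕ) u) (t : ℝ)
    (hexc : IsUnit (hankelMat r (fun i : Fin (2 * r + 1) =>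
      iteratedDeriv (i : ℕ) u t)).det) (ξ : Fin (r + 1) → ℝ)
    (h0 : ∀ s ∈ Set.Ioo t (t + 1), ∑ i, ξ i * iteratedDeriv (i : ℕ) u s = 0) : ξ = 0 := by
  have key : ∀ j : ℕ, j ≤ r → ∀ s ∈ Set.Ioo t (t + 1),
      ∑ i : Fin (r + 1), ξ i * iteratedDeriv ((i : ℕ) + j) u s = 0 := by
    intro j
    induction j with
    | zero => intro _; simpa using h0
    | succ j ih =>
      intro hj s hs
      have ih' := ih (by omega)
      have hd : HasDerivAt (fun s => ∑ i : Fin (r + 1), ξ i * iteratedDeriv ((i : ℕ) + j) u s)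
          (∑ i : Fin (r + 1), ξ i * iteratedDeriv ((i : ℕ) + (j + 1)) u s) s := by
        apply HasDerivAt.fun_sum
        intro i _
        apply HasDerivAt.const_mul
        have hdiff : Differentiable ℝ (iteratedDeriv ((i : ℕ) + j) u) := by
          apply hu.differentiable_iteratedDeriv
          have := i.2
          exact_mod_cast (by omega : (i : ℕ) + j < 2 * r)
        have := (hdiff s).hasDerivAt
        rwa [← iteratedDeriv_succ] at this
      have hz : HasDerivAt (fun s => ∑ i : Fin (r + 1), ξ i * iteratedDeriv ((i : ℕ) + j) u s)
          0 s := by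
        apply (hasDerivAt_const s (0 : ℝ)).congr_of_eventuallyEq
        filter_upwards [isOpen_Ioo.mem_nhds hs] with x hx using ih' x hx
      exact hd.unique hz
  have key2 : ∀ j : ℕ, j ≤ r →
      ∑ i : Fin (r + 1), ξ i * iteratedDeriv ((i : ℕ) + j) u t = 0 := by
    intro j hj
    have hc : Continuous (fun s => ∑ i : Fin (r + 1), ξ i * iteratedDeriv ((i : ℕ) + j) u s) := by
      apply continuous_finsetSum
      intro i _
      apply Continuous.mul continuous_const
      apply hu.continuous_iteratedDeriv
      have := i.2
      exact_mod_cast (by omega : (i : ℕ) + j ≤ 2 * r)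
    have hcl : IsClosed {s | ∑ i : Fin (r + 1), ξ i * iteratedDeriv ((i : ℕ) + j) u s = 0} :=
      isClosed_eq hc continuous_const
    have hsub := closure_minimal (fun s hs => key j hj s hs) hcl
    rw [closure_Ioo (by linarith)] at hsub
    exact hsub ⟨le_refl t, by linarith⟩
  apply Matrix.eq_zero_of_mulVec_eq_zero hexc.ne_zero
  funext j
  have := key2 j (by have := j.2; omega)
  simp only [Matrix.mulVec, dotProduct, hankelMat, Pi.zero_apply]
  rw [← this]
  refine Finset.sum_congr rfl fun i _ => ?_
  rw [mul_comm, add_comm]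

/-- Proposition 3, differential excitation implies persistent excitation.
If `u` is `C^{2r}` and the Hankel matrix `𝔐_r(ū^{(2r)}(t))` is invertible, then there are
`ε > 0` and `ρ > 0` with `∫_t^{t+ε} ū^{(r)}(s) (ū^{(r)}(s))ᵀ ds ⪰ ρ I_{r+1}`. -/
theorem differential_excitation_implies_persistent_excitation
    (r : ℕ) (hr : 0 < r) (u : ℝ → ℝ) (hu : ContDiff ℝ (2 * r : ℕ) u) (t : ℝ)
    (hexc : IsUnit (hankelMat r (fun i : Fin (2 * r + 1) =>
      iteratedDeriv (i : ℕ) u t)).det) :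
    ∃ ε > (0 : ℝ), ∃ ρ > (0 : ℝ), ∀ ξ : Fin (r + 1) → ℝ,
      (∫ s in t..(t + ε), (∑ i, ξ i * iteratedDeriv (i : ℕ) u s) ^ 2)
        ≥ ρ * ∑ i, (ξ i) ^ 2 := by
  have hcu : ∀ i : Fin (r + 1), Continuous (iteratedDeriv (i : ℕ) u) := by
    intro i
    apply hu.continuous_iteratedDeriv
    have := i.2
    exact_mod_cast (by omega : (i : ℕ) ≤ 2 * r)
  refine ⟨1, one_pos, ?_⟩
  set F : (Fin (r + 1) → ℝ) → ℝ := fun ξ =>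
    ∫ s in t..(t + 1), (∑ i, ξ i * iteratedDeriv (i : ℕ) u s) ^ 2 with hF
  have hFc : Continuous F := by
    apply intervalIntegral.continuous_parametric_intervalIntegral_of_continuous'
    simp only [Function.uncurry_def]
    fun_prop
  have hpos : ∀ ξ, ξ ≠ 0 → 0 < F ξ := by
    intro ξ hξ
    by_contra hneg
    apply hξ
    apply hankel_aux r u hu t hexc
    by_contra! hne
    obtain ⟨s, hs, hs0⟩ := hne
    apply hneg
    apply intervalIntegral.integral_pos (by linarith)
    · exact Continuous.continuousOn (by fun_prop)
    · intro x _; positivity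
    · exact ⟨s, ⟨hs.1.le, hs.2.le⟩, by positivity⟩
  have hK : IsCompact {ξ : Fin (r + 1) → ℝ | ∑ i, (ξ i) ^ 2 = 1} := by
    apply (isCompact_Icc (a := fun _ : Fin (r + 1) => (-1 : ℝ)) (b := fun _ => 1)).of_isClosed_subset
    · exact isClosed_eq (by fun_prop) continuous_const
    · intro ξ hξ
      have hb : ∀ i, |ξ i| ≤ 1 := by
        intro i
        rw [← sq_le_one_iff_abs_le_one, ← show ∑ i, (ξ i) ^ 2 = 1 from hξ]
        exact Finset.single_le_sum (f := fun i => (ξ i) ^ 2) (fun i _ => sq_nonneg _)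
          (Finset.mem_univ i)
      exact ⟨fun i => (abs_le.1 (hb i)).1, fun i => (abs_le.1 (hb i)).2⟩
  obtain ⟨η, hη, hmin⟩ := hK.exists_isMinOn ⟨Pi.single 0 1, by
    simp [Pi.single_apply]⟩ hFc.continuousOn
  refine ⟨F η, hpos η ?_, ?_⟩
  · rintro rfl
    simp at hη
  intro ξ
  change F ξ ≥ _
  by_cases h : ξ = 0
  · subst h
    simp [hF]
  have hS : 0 < ∑ i, (ξ i) ^ 2 := by
    obtain ⟨i, hi⟩ := Function.ne_iff.1 h
    have hi' : ξ i ≠ 0 := hi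
    exact Finset.sum_pos' (fun i _ => sq_nonneg _) ⟨i, Finset.mem_univ i, by positivity⟩
  set S := ∑ i, (ξ i) ^ 2 with hSdef
  have hc2 : ((Real.sqrt S)⁻¹) ^ 2 = S⁻¹ := by rw [inv_pow, Real.sq_sqrt hS.le]
  have hscale : F (fun i => (Real.sqrt S)⁻¹ * ξ i) = S⁻¹ * F ξ := by
    simp only [hF]
    rw [← intervalIntegral.integral_const_mul]
    congr 1
    funext s
    rw [← hc2, ← mul_pow, Finset.mul_sum]
    simp only [mul_assoc]
  have hm : F η ≤ F (fun i => (Real.sqrt S)⁻¹ * ξ i) := by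
    apply hmin
    change ∑ i, ((Real.sqrt S)⁻¹ * ξ i) ^ 2 = 1
    simp only [mul_pow, hc2]
    rw [← Finset.mul_sum, ← hSdef, inv_mul_cancel₀ hS.ne']
  rw [hscale, inv_mul_eq_div, le_div_iff₀ hS] at hm
  exact hm
end

section
/- Multisine signals are differentially exciting. Let r ≥ 1, let ω_1, …, ω_r be distinct positive real numbers and α_1, …, α_r nonzero real numbers, and let u(t) = Σ_{i=1}^r α_i sin(ω_i t). Then u is differentially exciting of order 2r−1 at every time t: the 2r×2r Hankel matrix 𝔐_{2r−1}(ū^{(4r−2)}(t)) is invertible for all t ∈ R. -/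
open scoped BigOperators

lemma multisine_iter (r : ℕ) (ω α : Fin r → ℝ) (n : ℕ) :
    iteratedDeriv n (fun s : ℝ => ∑ k, α k * Real.sin (ω k * s)) =
      fun s : ℝ => ∑ k, α k * ω k ^ n * Real.sin (ω k * s + n * (Real.pi / 2)) := by
  induction n with
  | zero => simp
  | succ n ih =>
    rw [iteratedDeriv_succ, ih]
    funext t
    apply HasDerivAt.deriv
    apply HasDerivAt.fun_sum
    intro k _
    have h1 : HasDerivAt (fun s : ℝ => ω k * s + n * (Real.pi / 2)) (ω k) t := by
      simpa using ((hasDerivAt_id t).const_mul (ω k)).add_const (n * (Real.pi / 2))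
    have h2 := (h1.sin).const_mul (α k * ω k ^ n)
    refine h2.congr_deriv ?_
    have : ω k * t + ((n + 1 : ℕ) : ℝ) * (Real.pi / 2)
        = (ω k * t + n * (Real.pi / 2)) + Real.pi / 2 := by
      push_cast; ring
    rw [this, Real.sin_add_pi_div_two]
    ring

lemma sin_shift (a w x : ℂ) (n : ℕ) :
    a * w ^ n * Complex.sin (x + n * (Real.pi / 2)) =
      (-(a * Complex.exp (x * Complex.I) * Complex.I / 2)) * (w * Complex.I) ^ n +
      (a * Complex.exp (-x * Complex.I) * Complex.I / 2) * (-(w * Complex.I)) ^ n := by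
  have h1 : Complex.exp ((x + n * (Real.pi / 2)) * Complex.I)
      = Complex.exp (x * Complex.I) * Complex.I ^ n := by
    rw [add_mul, Complex.exp_add, mul_assoc (n : ℂ), Complex.exp_nat_mul,
      Complex.exp_pi_div_two_mul_I]
  have h2 : Complex.exp (-(x + n * (Real.pi / 2)) * Complex.I)
      = Complex.exp (-x * Complex.I) * (-Complex.I) ^ n := by
    have : -(x + n * (Real.pi / 2)) * Complex.I
        = -x * Complex.I + n * (-Real.pi / 2 * Complex.I) := by ring
    rw [this, Complex.exp_add, Complex.exp_nat_mul, Complex.exp_neg_pi_div_two_mul_I]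
  rw [Complex.sin, h1, h2, ← mul_neg, mul_pow, mul_pow]
  ring

/-- multisine signals are differentially exciting.
If `ω₁, …, ω_r` are distinct positive reals and `α₁, …, α_r` are nonzero, then
`u(t) = Σ_{i=1}^r αᵢ sin(ωᵢ t)` is differentially exciting of order `2r−1` at every
time `t` : the `2r × 2r` Hankel matrix with entries `u^{(i+j)}(t)` is invertible. -/
theorem multisine_differentially_exciting
    (r : ℕ) (hr : 1 ≤ r)
    (ω : Fin r → ℝ) (hωpos : ∀ i, 0 < ω i) (hωdist : Function.Injective ω)
    (α : Fin r → ℝ) (hα : ∀ i, α i ≠ 0) :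
    ∀ t : ℝ, IsUnit (Matrix.det (Matrix.of fun i j : Fin (2 * r) =>
      iteratedDeriv ((i : ℕ) + (j : ℕ))
        (fun s : ℝ => ∑ k, α k * Real.sin (ω k * s)) t)) := by
  intro t
  rw [isUnit_iff_ne_zero]
  let e : Fin (2 * r) ≃ Bool × Fin r :=
    finProdFinEquiv.symm.trans (Equiv.prodCongr finTwoEquiv (Equiv.refl _))
  let lam : Bool × Fin r → ℂ := fun p =>
    if p.1 then (ω p.2 : ℂ) * Complex.I else -((ω p.2 : ℂ) * Complex.I)
  let d : Bool × Fin r → ℂ := fun p =>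
    if p.1 then -((α p.2 : ℂ) * Complex.exp (((ω p.2 : ℂ) * t) * Complex.I) * Complex.I / 2)
    else ((α p.2 : ℂ) * Complex.exp (-((ω p.2 : ℂ) * t) * Complex.I) * Complex.I / 2)
  have hd : ∀ p, d p ≠ 0 := by
    rintro ⟨b, k⟩
    have := hα k
    cases b <;> simp [d, this, Complex.exp_ne_zero]
  have hlam : Function.Injective lam := by
    rintro ⟨b, k⟩ ⟨c, l⟩ h
    have h := congrArg Complex.im h
    have hk := hωpos k
    have hl := hωpos l
    cases b <;> cases c <;> simp [lam] at h ⊢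
    · exact hωdist h
    · linarith
    · linarith
    · exact hωdist h
  let V := Matrix.vandermonde (fun x => lam (e x))
  have key : (Matrix.of fun i j : Fin (2 * r) =>
      iteratedDeriv ((i : ℕ) + (j : ℕ))
        (fun s : ℝ => ∑ k, α k * Real.sin (ω k * s)) t).map Complex.ofRealHom
      = V.transpose * Matrix.diagonal (fun x => d (e x)) * V := by
    ext i j
    rw [Matrix.mul_apply]
    simp only [Matrix.mul_diagonal, Matrix.transpose_apply, V, Matrix.vandermonde_apply,
      Matrix.map_apply, Matrix.of_apply, multisine_iter]
    rw [Equiv.sum_comp e (fun p => lam p ^ (i : ℕ) * d p * lam p ^ (j : ℕ)),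
      Fintype.sum_prod_type, Fintype.sum_bool, ← Finset.sum_add_distrib, map_sum]
    refine Finset.sum_congr rfl fun k _ => ?_
    have := sin_shift (α k) (ω k) (ω k * t) ((i : ℕ) + (j : ℕ))
    simp only [lam, d, if_true, Bool.false_eq_true, if_false]
    simp only [Complex.ofRealHom_eq_coe]
    push_cast at this ⊢
    rw [this, pow_add, pow_add]
    ring
  intro h0
  have h1 := congrArg Matrix.det key
  rw [← RingHom.mapMatrix_apply, ← RingHom.map_det, h0, map_zero, Matrix.det_mul,
    Matrix.det_mul, Matrix.det_transpose, Matrix.det_diagonal] at h1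
  have hV : V.det ≠ 0 := Matrix.det_vandermonde_ne_zero_iff.mpr (hlam.comp e.injective)
  exact mul_ne_zero (mul_ne_zero hV (Finset.prod_ne_zero_iff.mpr fun x _ => hd _)) hV h1.symm
end

section
/- Implicit linear representation of T for the canonical form (equation (33)). Let θ = (θ_a, θ_b) ∈ R^n × R^n and let λ < 0 be a real number that is not an eigenvalue of A(θ_a). Set V_λ = −(1/λ, 1/λ², …, 1/λ^n)^T ∈ R^n and T_λ(x, θ, w) = C (A(θ_a) − λ I_n)^{-1}(x − θ_b w) for x ∈ R^n, w ∈ R. Then for all x ∈ R^n and w ∈ R: T_λ(x, θ, w) = V_λ^T x + T_λ(x, θ, w) · (V_λ^T θ_a) − w · (V_λ^T θ_b); equivalently, (1 − V_λ^T θ_a) T_λ(x, θ, w) = V_λ^T x − w V_λ^T θ_b. -/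
open scoped Matrix BigOperators

/-- The first basis row vector `e₁ᵀ = (1, 0, …, 0)`. -/
def e1 (n : ℕ) : Fin n → ℝ := fun j => if (j : ℕ) = 0 then 1 else 0

/-- Canonical SISO form : `A(θ_a)` has first column `−θ_a` and entries `(i, i+1)` equal
to `1`, all other entries `0`. -/
def Acan (n : ℕ) (θa : Fin n → ℝ) : Matrix (Fin n) (Fin n) ℝ :=
  fun i j => if (j : ℕ) = 0 then -θa i else if (j : ℕ) = (i : ℕ) + 1 then 1 else 0

/-- `V_λ = −(1/λ, 1/λ², …, 1/λ^n)ᵀ`. -/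
noncomputable def Vlam (n : ℕ) (lam : ℝ) : Fin n → ℝ :=
  fun i => -(1 / lam ^ ((i : ℕ) + 1))

/-- implicit linear representation of `T` for the canonical form,
equation (33): with `T_λ(x,θ,w) = C (A(θ_a) − λIₙ)⁻¹ (x − θ_b w)`,
`T_λ(x,θ,w) = V_λᵀ x + T_λ(x,θ,w) (V_λᵀ θ_a) − w (V_λᵀ θ_b)`. -/
theorem implicit_linear_representation_T
    (n : ℕ) (θa θb : Fin n → ℝ) (lam : ℝ) (hlam : lam < 0)
    (hinv : IsUnit (Acan n θa - lam • (1 : Matrix (Fin n) (Fin n) ℝ)).det)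
    (T : (Fin n → ℝ) → ℝ → ℝ)
    (hT : ∀ x w, T x w
      = Matrix.vecMul (e1 n) (Acan n θa - lam • (1 : Matrix (Fin n) (Fin n) ℝ))⁻¹
          ⬝ᵥ (x - w • θb)) :
    ∀ (x : Fin n → ℝ) (w : ℝ),
      T x w = Vlam n lam ⬝ᵥ x + T x w * (Vlam n lam ⬝ᵥ θa)
        - w * (Vlam n lam ⬝ᵥ θb) := by
  intro x w
  have hl : lam ≠ 0 := hlam.ne
  have key : Matrix.vecMul (Vlam n lam) (Acan n θa - lam • (1 : Matrix (Fin n) (Fin n) ℝ))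
      = (1 - Vlam n lam ⬝ᵥ θa) • e1 n := by
    rw [Matrix.vecMul_sub, Matrix.vecMul_smul, Matrix.vecMul_one]
    funext j
    simp only [Pi.sub_apply, Pi.smul_apply, smul_eq_mul, Matrix.vecMul, dotProduct]
    by_cases hj : (j : ℕ) = 0
    · simp only [Acan, e1, hj, if_true, Vlam, mul_neg, Finset.sum_neg_distrib]
      field_simp
      ring
    · have hjn := j.isLt
      have h1 : ∑ i, Vlam n lam i * Acan n θa i j
          = Vlam n lam ⟨(j : ℕ) - 1, by omega⟩ := by
        rw [Finset.sum_eq_single (⟨(j : ℕ) - 1, by omega⟩ : Fin n)]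
        · have : (j : ℕ) = (j : ℕ) - 1 + 1 := by omega
          simp only [Acan, if_neg hj, if_pos this, mul_one]
        · intro i _ hi
          have : ¬ (j : ℕ) = (i : ℕ) + 1 := by
            intro h
            apply hi
            ext
            simp [h]
          simp only [Acan, if_neg hj, if_neg this, mul_zero]
        · simp
      rw [h1]
      have h2 : (j : ℕ) - 1 + 1 = j := by omega
      simp only [Vlam, e1, if_neg hj, h2, pow_succ]
      field_simp
      ring
  have hV : Vlam n lam = (1 - Vlam n lam ⬝ᵥ θa) •
      Matrix.vecMul (e1 n) (Acan n θa - lam • (1 : Matrix (Fin n) (Fin n) ℝ))⁻¹ := by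
    rw [← Matrix.smul_vecMul, ← key, Matrix.vecMul_vecMul, Matrix.mul_nonsing_inv _ hinv,
      Matrix.vecMul_one]
  have h3 : Vlam n lam ⬝ᵥ (x - w • θb) = (1 - Vlam n lam ⬝ᵥ θa) * T x w := by
    rw [hT, ← smul_eq_mul, ← smul_dotProduct, ← hV]
  rw [dotProduct_sub, dotProduct_smul, smul_eq_mul] at h3
  linarith
end
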